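/- Let A_n = [a_n, b_n] be a sequence of compact intervals in ℝ with 0 < a_n < b_n and b_n − a_n → ∞, and assume there exist c > 1 and N such that b_n ≥ c·a_n for all n > N. Then the counting autocorrelation of ℙ with respect to (A_n) exists and equals δ_0, i.e., writing F_n = ℙ ∩ A_n, for every continuous compactly supported f : ℝ → ℂ one has (1/card F_n)·Σ_{x,y∈F_n} f(x−y) → f(0) as n → ∞. -/

import Mathlib

open Filter Topology Set

/-- The set of prime numbers together with their negatives, as a subset of `ℝ`. -/
def PrimesR : Set ℝ := {x | ∃ p : ℕ, p.Prime ∧ (x = (p : ℝ) ∨ x = -(p : ℝ))}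

/-- The (counting-normalised) autocorrelation sum of the finite sample `F` applied to a
test function `f`; interpreted as `0` when `F = ∅` (since then `(F.ncard : ℂ)⁻¹ = 0`). -/
noncomputable def autoCorr (F : Set ℝ) (f : ℝ → ℂ) : ℂ :=
  ((F.ncard : ℂ))⁻¹ * ∑ᶠ x ∈ F, ∑ᶠ y ∈ F, f (x - y)

open MeasureTheory Asymptotics

/-!
For a finite set `S` of integers, `∑ x y, f (x - y)` is the sum over `h` in the support of `f` of
`#{y ∈ S | y + h ∈ S} * f h`, so it is enough that for each `h ≠ 0` the pairs `p`, `p + h` are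
negligible among the primes of `[a, b]`.

If `c * a ≤ b`, there are `≫ b / log b` primes in `[a, b]`. On the other hand, if both `p` and
`p + h` are primes larger than `Q`, then `p` lies in one of the classes `r` modulo `Q` with `r` and
`r + h` units. For `Q` a product of primes not dividing `h`, the proportion of these among all unit
classes is at most `∏ (1 - 1 / p)`, hence arbitrarily small since `∑ 1 / p` diverges, and each unit
class contains at most `C * x / (φ(Q) * log x)` primes `p` with `√x ≤ p ≤ x`, with `C` independent
of `Q`.

Both prime bounds come from a Chebyshev-type form of the Wiener–Ikehara theorem. The Dirichlet
series of `Λ` on a unit class minus its pole is continuous on `1 ≤ re s` (non-vanishing of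
`L`-functions). Testing it against the triangle function and letting `re s → 1`, the
Riemann–Lebesgue lemma shows that `∑ Λ(n) / n * K(log n - y)` over the class tends to
`φ(Q)⁻¹ * ∫ K` as `y → ∞` for every Fejér kernel `K`.
-/

section FejerKernel

/-- The Fejér kernel `T * (sin (T u / 2) / (T u / 2)) ^ 2`, which is the Fourier transform of the
triangle function `t ↦ 1 - |t| / T` on `[-T, T]`. Going through `Real.sinc` gives the value `T` at
`u = 0`. -/
noncomputable def fejerKernel (T u : ℝ) : ℝ := T * Real.sinc (T * u / 2) ^ 2

variable {T : ℝ}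

lemma continuous_fejerKernel (T : ℝ) : Continuous (fejerKernel T) := by
  unfold fejerKernel
  fun_prop

lemma fejerKernel_nonneg (hT : 0 ≤ T) (u : ℝ) : 0 ≤ fejerKernel T u := by
  unfold fejerKernel
  positivity

lemma fejerKernel_le (hT : 0 ≤ T) (u : ℝ) : fejerKernel T u ≤ T :=
  mul_le_of_le_one_right hT ((sq_le_one_iff_abs_le_one _).2 (Real.abs_sinc_le_one _))

lemma sq_mul_fejerKernel (hT : T ≠ 0) (u : ℝ) :
    u ^ 2 * fejerKernel T u = 4 / T * Real.sin (T * u / 2) ^ 2 := by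
  rcases eq_or_ne u 0 with rfl | hu
  · simp
  · rw [fejerKernel, Real.sinc_of_ne_zero (by positivity)]
    field_simp
    ring

lemma sq_mul_fejerKernel_le (hT : 0 < T) (u : ℝ) : u ^ 2 * fejerKernel T u ≤ 4 / T := by
  rw [sq_mul_fejerKernel hT.ne']
  exact mul_le_of_le_one_right (by positivity) (Real.sin_sq_le_one _)

lemma fejerKernel_le_mul_inv_one_add_sq (hT : 0 < T) (u : ℝ) :
    fejerKernel T u ≤ (T + 4 / T) * (1 + u ^ 2)⁻¹ := by
  rw [← div_eq_mul_inv, le_div_iff₀ (by positivity)]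
  linarith [fejerKernel_le hT.le u, sq_mul_fejerKernel_le hT u]

lemma fejerKernel_le_mul_inv_one_add_sq_of_le_abs {δ u : ℝ} (hT : 0 < T) (hδ : 0 < δ)
    (hu : δ ≤ |u|) : fejerKernel T u ≤ 4 / T * (1 + 1 / δ ^ 2) * (1 + u ^ 2)⁻¹ := by
  have hδu : δ ^ 2 ≤ u ^ 2 := sq_le_sq.2 (by rwa [abs_of_pos hδ])
  have hu0 : 0 < u ^ 2 := (pow_pos hδ 2).trans_le hδu
  have hune : u ≠ 0 := pow_ne_zero_iff two_ne_zero |>.1 hu0.ne'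
  calc fejerKernel T u
      ≤ 4 / T * (1 / u ^ 2) := by
        rw [mul_one_div, le_div_iff₀ hu0, mul_comm]
        exact sq_mul_fejerKernel_le hT u
    _ = 4 / T * (1 + 1 / u ^ 2) * (1 + u ^ 2)⁻¹ := by field_simp; ring
    _ ≤ 4 / T * (1 + 1 / δ ^ 2) * (1 + u ^ 2)⁻¹ := by gcongr

-- The numerators `sin² (u / 2)` and `cos² (u / 2)` of the two translates add up to `1`.
lemma inv_one_add_sq_le_fejerKernel_add (u : ℝ) :
    (1 + u ^ 2)⁻¹ ≤ 6 * (fejerKernel 1 u + fejerKernel 1 (u - Real.pi)) := by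
  have hsin := sq_mul_fejerKernel one_ne_zero u
  have hcos := sq_mul_fejerKernel one_ne_zero (u - Real.pi)
  rw [one_mul, sub_div, Real.sin_sub_pi_div_two, neg_sq] at hcos
  rw [one_mul] at hsin
  have hpi : Real.pi ^ 2 ≤ 10 := by nlinarith [Real.pi_lt_d2, Real.pi_pos]
  have h₀ : u ^ 2 ≤ 20 * (1 + u ^ 2) := by nlinarith [sq_nonneg u]
  have h₁ : (u - Real.pi) ^ 2 ≤ 20 * (1 + u ^ 2) := by nlinarith [sq_nonneg (u + Real.pi)]
  rw [inv_le_iff_one_le_mul₀ (by positivity)]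
  linarith [mul_le_mul_of_nonneg_right h₀ (fejerKernel_nonneg zero_le_one u),
    mul_le_mul_of_nonneg_right h₁ (fejerKernel_nonneg zero_le_one (u - Real.pi)),
    Real.sin_sq_add_cos_sq (u / 2)]

lemma integrable_fejerKernel (hT : 0 < T) : Integrable (fejerKernel T) :=
  (integrable_inv_one_add_sq.const_mul (T + 4 / T)).mono'
    (continuous_fejerKernel T).aestronglyMeasurable <| ae_of_all _ fun u ↦ by
      rw [Real.norm_of_nonneg (fejerKernel_nonneg hT.le u)]
      exact fejerKernel_le_mul_inv_one_add_sq hT u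

lemma integral_fejerKernel_eq (hT : 0 < T) : ∫ u, fejerKernel T u = ∫ u, fejerKernel 1 u := by
  have hscale : fejerKernel T = fun u ↦ T * fejerKernel 1 (T * u) := by
    ext u
    simp [fejerKernel]
  rw [hscale, integral_const_mul, Measure.integral_comp_mul_left, smul_eq_mul,
    abs_of_pos (inv_pos.2 hT), mul_inv_cancel_left₀ hT.ne']

lemma integral_fejerKernel_pos (hT : 0 < T) : 0 < ∫ u, fejerKernel T u :=
  integral_pos_of_integrable_nonneg_nonzero (x := 0) (continuous_fejerKernel T)
    (integrable_fejerKernel hT) (fejerKernel_nonneg hT.le) (by simp [fejerKernel, hT.ne'])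

lemma integral_triangle_mul_cos (hT : 0 < T) (u : ℝ) :
    2 * ∫ t in 0..T, (1 - t / T) * Real.cos (t * u) = fejerKernel T u := by
  rcases eq_or_ne u 0 with rfl | hu
  · have hprim : ∫ t in 0..T, (1 - t / T) = T / 2 := by
      rw [intervalIntegral.integral_sub (by simp) (by simp), intervalIntegral.integral_const,
        intervalIntegral.integral_div, integral_id, smul_eq_mul]
      field_simp
      ring
    simp only [fejerKernel, mul_zero, Real.cos_zero, mul_one, hprim, zero_div, Real.sinc_zero]
    ring
  have hderiv (t : ℝ) : HasDerivAt
      (fun t ↦ (1 - t / T) * Real.sin (t * u) / u - Real.cos (t * u) / (T * u ^ 2))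
      ((1 - t / T) * Real.cos (t * u)) t := by
    have htu : HasDerivAt (fun t ↦ t * u) u t := by simpa using (hasDerivAt_id t).mul_const u
    refine ((((((hasDerivAt_id t).div_const T).const_sub 1).mul htu.sin).div_const u).sub
      (htu.cos.div_const (T * u ^ 2))).congr_deriv ?_
    simp only [id_eq]
    field_simp
    ring
  rw [intervalIntegral.integral_eq_sub_of_hasDerivAt (fun t _ ↦ hderiv t)
    (Continuous.intervalIntegrable (by fun_prop) _ _), fejerKernel,
    Real.sinc_of_ne_zero (by positivity), div_pow, Real.sin_sq_eq_half_sub,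
    show 2 * (T * u / 2) = T * u by ring]
  simp only [div_self hT.ne', sub_self, zero_mul, zero_div, zero_sub, Real.sin_zero, mul_zero,
    Real.cos_zero]
  field_simp
  ring

/-- The Fourier integral of `F` truncated to `[-T, T]` by the triangle function `1 - |t| / T`. -/
noncomputable def fejerTransform (T : ℝ) (F : ℝ → ℂ) (y : ℝ) : ℂ :=
  ∫ t in Icc (-T) T, ((1 - |t| / T : ℝ) : ℂ) * Complex.exp (-(t * y * Complex.I)) * F t

lemma fejerTransform_exp (hT : 0 < T) (v y : ℝ) :
    fejerTransform T (fun t ↦ Complex.exp (t * v * Complex.I)) y = fejerKernel T (v - y) := by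
  set g : ℝ → ℂ := fun t ↦ ((1 - |t| / T : ℝ) : ℂ) * Complex.exp (-(t * y * Complex.I)) *
    Complex.exp (t * v * Complex.I) with hg
  have hgcont : Continuous g := by fun_prop
  have hgneg : Continuous fun t ↦ g (-t) := by fun_prop
  have hsymm : ∀ t ∈ uIcc 0 T,
      g (-t) + g t = ((2 * ((1 - t / T) * Real.cos (t * (v - y))) : ℝ) : ℂ) := by
    intro t ht
    rw [uIcc_of_le hT.le] at ht
    simp only [hg, abs_neg, abs_of_nonneg ht.1, mul_assoc, ← Complex.exp_add]
    rw [← mul_add]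
    push_cast
    rw [mul_left_comm (2 : ℂ), Complex.two_cos]
    ring_nf
  calc fejerTransform T (fun t ↦ Complex.exp (t * v * Complex.I)) y
      = (∫ t in (-T)..0, g t) + ∫ t in 0..T, g t := by
        rw [fejerTransform, integral_Icc_eq_integral_Ioc,
          ← intervalIntegral.integral_of_le (by linarith),
          intervalIntegral.integral_add_adjacent_intervals (hgcont.intervalIntegrable _ _)
            (hgcont.intervalIntegrable _ _)]
    _ = ∫ t in 0..T, (g (-t) + g t) := by
        rw [intervalIntegral.integral_add (hgneg.intervalIntegrable _ _)
            (hgcont.intervalIntegrable _ _),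
          intervalIntegral.integral_comp_neg, neg_zero]
    _ = fejerKernel T (v - y) := by
        rw [intervalIntegral.integral_congr hsymm, intervalIntegral.integral_ofReal,
          intervalIntegral.integral_const_mul, integral_triangle_mul_cos hT]

lemma fejerTransform_const_mul_add {F₁ F₂ : ℝ → ℂ} (hF₁ : Continuous F₁) (hF₂ : Continuous F₂)
    (c : ℂ) (y : ℝ) : fejerTransform T (fun t ↦ c * F₁ t + F₂ t) y =
      c * fejerTransform T F₁ y + fejerTransform T F₂ y := by
  rw [fejerTransform, fejerTransform, fejerTransform, ← integral_const_mul, ← integral_add]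
  · congr with t
    ring
  · exact Continuous.integrableOn_Icc (by fun_prop)
  · exact Continuous.integrableOn_Icc (by fun_prop)

lemma fejerTransform_integral {α : Type*} [MeasurableSpace α] {μ : Measure α} [SFinite μ]
    (hT : 0 < T) {g : α → ℂ} (hg : Integrable g μ) {v : α → ℝ} (hv : Measurable v) (y : ℝ) :
    fejerTransform T (fun t ↦ ∫ x, g x * Complex.exp (t * v x * Complex.I) ∂μ) y =
      ∫ x, g x * fejerKernel T (v x - y) ∂μ := by
  set m : ℝ → ℂ := fun t ↦ ((1 - |t| / T : ℝ) : ℂ) * Complex.exp (-(t * y * Complex.I)) with hm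
  have hmint : Integrable m (volume.restrict (Icc (-T) T)) :=
    Continuous.integrableOn_Icc (by fun_prop)
  have hintegrable : Integrable
      (Function.uncurry fun t x ↦ m t * (g x * Complex.exp (t * v x * Complex.I)))
      ((volume.restrict (Icc (-T) T)).prod μ) := by
    refine (hmint.mul_prod hg).mono ?_ (ae_of_all _ fun ⟨t, x⟩ ↦ ?_)
    · have hexp : AEStronglyMeasurable
          (fun p : ℝ × α ↦ Complex.exp (p.1 * v p.2 * Complex.I))
          ((volume.restrict (Icc (-T) T)).prod μ) := by fun_prop
      exact hmint.1.comp_fst.mul (hg.1.comp_snd.mul hexp)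
    · have hexp : ‖Complex.exp (t * v x * Complex.I)‖ = 1 := by
        rw [← Complex.ofReal_mul, Complex.norm_exp_ofReal_mul_I]
      simp [hexp]
  calc fejerTransform T (fun t ↦ ∫ x, g x * Complex.exp (t * v x * Complex.I) ∂μ) y
      = ∫ t in Icc (-T) T, ∫ x, m t * (g x * Complex.exp (t * v x * Complex.I)) ∂μ := by
        simp only [fejerTransform, hm, integral_const_mul]
    _ = ∫ x, (∫ t : ℝ in Icc (-T) T, m t * (g x * Complex.exp (t * v x * Complex.I))) ∂μ :=
        integral_integral_swap hintegrable
    _ = ∫ x, g x * fejerKernel T (v x - y) ∂μ := by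
        simp only [← fejerTransform_exp hT, fejerTransform, ← integral_const_mul,
          mul_left_comm (g _), hm]

lemma tendsto_fejerTransform_atTop (T : ℝ) (F : ℝ → ℂ) :
    Tendsto (fejerTransform T F) atTop (𝓝 0) := by
  have hRL := (Real.tendsto_integral_exp_smul_cocompact ((Icc (-T) T).indicator
    fun t ↦ ((1 - |t| / T : ℝ) : ℂ) * F t)).mono_left atTop_le_cocompact
  have hscale : Tendsto (fun y : ℝ ↦ y / (2 * Real.pi)) atTop atTop :=
    tendsto_id.atTop_div_const (by positivity)
  refine (hRL.comp hscale).congr fun y ↦ ?_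
  rw [fejerTransform, ← integral_indicator measurableSet_Icc, Function.comp]
  congr with t
  by_cases ht : t ∈ Icc (-T) T
  · have hphase : 2 * Real.pi * -(t * (y / (2 * Real.pi))) = -(t * y) := by field_simp
    simp only [indicator_of_mem ht, Circle.smul_def, Real.fourierChar_apply, smul_eq_mul, hphase]
    push_cast
    rw [neg_mul]
    ring
  · simp only [indicator_of_notMem ht, smul_zero]

lemma continuous_fejerTransform_of_continuous_uncurry {X : Type*} [TopologicalSpace X]
    [FirstCountableTopology X] [LocallyCompactSpace X] {F : X → ℝ → ℂ}
    (hF : Continuous (Function.uncurry F)) (T y : ℝ) :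
    Continuous fun x ↦ fejerTransform T (F x) y := by
  have hweight : Continuous fun p : X × ℝ ↦
      ((1 - |p.2| / T : ℝ) : ℂ) * Complex.exp (-(p.2 * y * Complex.I)) := by fun_prop
  exact continuous_parametric_integral_of_continuous (hweight.mul hF) isCompact_Icc

lemma fejerTransform_inv_sub_mul_I (hT : 0 < T) {ε : ℝ} (hε : 0 < ε) (y : ℝ) :
    fejerTransform T (fun t ↦ (ε - t * Complex.I)⁻¹) y =
      ((∫ u in Ioi 0, Real.exp (-ε * u) * fejerKernel T (u - y) : ℝ) : ℂ) := by
  have hintegrable : IntegrableOn (fun u : ℝ ↦ Complex.exp (-ε * u)) (Ioi 0) :=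
    integrableOn_exp_mul_complex_Ioi (by simpa using hε) 0
  have hlaplace (t : ℝ) :
      ∫ u in Ioi (0 : ℝ), Complex.exp (-ε * u) * Complex.exp (t * u * Complex.I) =
        (ε - t * Complex.I)⁻¹ := by
    have hexp := integral_exp_mul_complex_Ioi (a := -ε + t * Complex.I) (by simpa using hε) 0
    rw [Complex.ofReal_zero, mul_zero, Complex.exp_zero, neg_div, ← div_neg, neg_add, neg_neg,
      ← sub_eq_add_neg, one_div] at hexp
    rw [← hexp]
    congr with u
    rw [← Complex.exp_add]
    ring_nf
  rw [← integral_complex_ofReal]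
  simpa only [hlaplace, Complex.ofReal_mul, Complex.ofReal_exp, Complex.ofReal_neg,
    id_eq] using
    fejerTransform_integral hT hintegrable measurable_id y

end FejerKernel

section WienerIkehara

/-- The hypotheses of the Wiener–Ikehara theorem: the Dirichlet series with nonnegative
coefficients `w` converges for `1 < re s`, and after subtracting its polar part `A / (s - 1)` it is
given there by a function `G` that is continuous up to the line `re s = 1`. -/
structure IsWienerIkehara (w : ℕ → ℝ) (A : ℝ) (G : ℂ → ℂ) : Prop where
  nonneg (n : ℕ) : 0 ≤ w n
  lseriesSummable {s : ℂ} (hs : 1 < s.re) : LSeriesSummable (fun n ↦ (w n : ℂ)) s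
  eqOn : EqOn G (fun s ↦ LSeries (fun n ↦ (w n : ℂ)) s - A / (s - 1)) {s | 1 < s.re}
  continuousOn : ContinuousOn G {s | 1 ≤ s.re}

lemma lseries_term_sub_mul_I (w : ℕ → ℝ) {σ : ℝ} (hσ : σ ≠ 0) (t : ℝ) (n : ℕ) :
    LSeries.term (fun n ↦ (w n : ℂ)) (σ - t * Complex.I) n =
      ((w n * (n : ℝ) ^ (-σ) : ℝ) : ℂ) * Complex.exp (t * Real.log n * Complex.I) := by
  rcases eq_or_ne n 0 with rfl | hn
  · simp [Real.zero_rpow (neg_ne_zero.2 hσ)]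
  have hn' : (n : ℂ) ≠ 0 := Nat.cast_ne_zero.2 hn
  have hphase : (n : ℂ) ^ (t * Complex.I) = Complex.exp (t * Real.log n * Complex.I) := by
    rw [Complex.cpow_def_of_ne_zero hn', Complex.natCast_log]
    ring_nf
  rw [LSeries.term_of_ne_zero hn, div_eq_mul_inv, ← Complex.cpow_neg, neg_sub, sub_eq_neg_add,
    Complex.cpow_add _ _ hn', hphase, Complex.ofReal_mul, Complex.ofReal_cpow n.cast_nonneg]
  push_cast
  ring

lemma integral_count_eq_tsum {X E : Type*} [Countable X] [MeasurableSpace X]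
    [MeasurableSingletonClass X] [NormedAddCommGroup E] [NormedSpace ℝ E] [FiniteDimensional ℝ E]
    (f : X → E) : ∫ x, f x ∂Measure.count = ∑' x, f x := by
  have := FiniteDimensional.complete ℝ E
  by_cases hf : Summable f
  · simp [integral_countable (integrable_count_iff.2 hf.norm)]
  · rw [tsum_eq_zero_of_not_summable hf, integral_undef]
    rwa [integrable_count_iff, summable_norm_iff]

lemma hasSum_div_natCast_of_tendsto {c : ℕ → ℝ} (hc : ∀ n, 0 ≤ c n) {S : ℝ → ℝ} {S₁ : ℝ}
    (hS : ∀ σ, 1 < σ → HasSum (fun n : ℕ ↦ c n * (n : ℝ) ^ (-σ)) (S σ))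
    (hlim : Tendsto S (𝓝[>] 1) (𝓝 S₁)) : HasSum (fun n : ℕ ↦ c n / n) S₁ := by
  have hterm (n : ℕ) : Tendsto (fun σ : ℝ ↦ c n * (n : ℝ) ^ (-σ)) (𝓝[>] 1) (𝓝 (c n / n)) := by
    have hcont : ContinuousAt (fun σ : ℝ ↦ c n * (n : ℝ) ^ (-σ)) 1 :=
      ((Real.continuousAt_const_rpow' (neg_ne_zero.2 one_ne_zero)).comp
        continuousAt_neg).const_mul _
    simpa only [Real.rpow_neg_one, ← div_eq_mul_inv] using
      hcont.tendsto.mono_left nhdsWithin_le_nhds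
  have hle (s : Finset ℕ) : ∑ n ∈ s, c n / n ≤ S₁ :=
    le_of_tendsto_of_tendsto (tendsto_finsetSum s fun n _ ↦ hterm n) hlim <|
      eventually_nhdsWithin_of_forall fun σ hσ ↦ sum_le_hasSum s
        (fun n _ ↦ mul_nonneg (hc n) (by positivity)) (hS σ hσ)
  have hsum : Summable fun n : ℕ ↦ c n / n :=
    summable_of_sum_le (fun n ↦ div_nonneg (hc n) n.cast_nonneg) hle
  have hge : S₁ ≤ ∑' n : ℕ, c n / n :=
    le_of_tendsto hlim <| eventually_nhdsWithin_of_forall fun σ hσ ↦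
      hasSum_le (fun n ↦ by
        rcases n.eq_zero_or_pos with rfl | hn
        · simp [Real.zero_rpow (neg_ne_zero.2 (zero_lt_one.trans hσ).ne')]
        rw [div_eq_mul_inv, ← Real.rpow_neg_one]
        have hn' : (1 : ℝ) ≤ n := Nat.one_le_cast.2 hn
        have hσ' : -σ ≤ -1 := neg_le_neg (le_of_lt hσ)
        have := hc n
        gcongr) (hS σ hσ) hsum.hasSum
  exact (hsum.tsum_le_of_sum_le hle).antisymm hge ▸ hsum.hasSum

lemma tendsto_integral_exp_neg_mul_Ioi {g : ℝ → ℝ} (hg : IntegrableOn g (Ioi 0)) :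
    Tendsto (fun ε : ℝ ↦ ∫ u in Ioi 0, Real.exp (-ε * u) * g u) (𝓝[>] 0)
      (𝓝 (∫ u in Ioi 0, g u)) := by
  refine tendsto_integral_filter_of_dominated_convergence (fun u ↦ ‖g u‖)
    (Eventually.of_forall fun ε ↦ ?_) ?_ hg.norm (ae_of_all _ fun u ↦ ?_)
  · exact Continuous.aestronglyMeasurable (by fun_prop) |>.mul hg.1
  · filter_upwards [self_mem_nhdsWithin] with ε hε
    filter_upwards [ae_restrict_mem measurableSet_Ioi] with u hu
    rw [norm_mul, Real.norm_of_nonneg (Real.exp_pos _).le]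
    refine mul_le_of_le_one_left (norm_nonneg _) (Real.exp_le_one_iff.2 ?_)
    exact mul_nonpos_of_nonpos_of_nonneg (neg_nonpos.2 (le_of_lt hε)) (le_of_lt hu)
  · have hcont : Continuous fun ε : ℝ ↦ Real.exp (-ε * u) * g u := by fun_prop
    simpa using (hcont.tendsto 0).mono_left nhdsWithin_le_nhds

lemma tendsto_setIntegral_Ioi_comp_sub {g : ℝ → ℝ} (hg : Integrable g) :
    Tendsto (fun y ↦ ∫ u in Ioi 0, g (u - y)) atTop (𝓝 (∫ u, g u)) := by
  have htranslate (y : ℝ) : ∫ u in Ioi (-y), g u = ∫ u in Ioi 0, g (u - y) := by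
    rw [← (measurePreserving_sub_right volume y).setIntegral_preimage_emb
      (measurableEmbedding_subRight y), preimage_sub_const_Ioi, neg_add_cancel]
  exact ((aecover_Ioi tendsto_neg_atTop_atBot).integral_tendsto_of_countably_generated hg).congr
    htranslate

lemma exp_le_two_mul_inv_one_add_sq {u : ℝ} (hu : u ≤ 0) : Real.exp u ≤ 2 * (1 + u ^ 2)⁻¹ := by
  have hquad := Real.quadratic_le_exp_of_nonneg (neg_nonneg.2 hu)
  rw [← neg_neg u, Real.exp_neg, neg_neg, ← div_eq_mul_inv, ← inv_div]
  exact inv_anti₀ (by positivity) (by linarith)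

namespace IsWienerIkehara

variable {w : ℕ → ℝ} {A : ℝ} {G : ℂ → ℂ} {T : ℝ}

lemma summable_mul_rpow_neg (h : IsWienerIkehara w A G) {σ : ℝ} (hσ : 1 < σ) :
    Summable fun n : ℕ ↦ w n * (n : ℝ) ^ (-σ) := by
  have hterm := h.lseriesSummable (s := σ - (0 : ℝ) * Complex.I) (by simpa using hσ)
  refine Complex.summable_ofReal.1 (hterm.congr fun n ↦ ?_)
  rw [lseries_term_sub_mul_I w (zero_lt_one.trans hσ).ne']
  simp

lemma fejerTransform_lseries (h : IsWienerIkehara w A G) (hT : 0 < T) {σ : ℝ} (hσ : 1 < σ)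
    (y : ℝ) :
    fejerTransform T (fun t ↦ LSeries (fun n ↦ (w n : ℂ)) (σ - t * Complex.I)) y =
      ((∑' n : ℕ, w n * (n : ℝ) ^ (-σ) * fejerKernel T (Real.log n - y) : ℝ) : ℂ) := by
  have hsum := h.summable_mul_rpow_neg hσ
  have hintegrable : Integrable (fun n : ℕ ↦ ((w n * (n : ℝ) ^ (-σ) : ℝ) : ℂ)) Measure.count :=
    integrable_count_iff.2 (by simpa only [Complex.norm_real] using hsum.norm)
  have hseries := fejerTransform_integral hT hintegrable (v := fun n ↦ Real.log n) .of_discrete y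
  simpa only [LSeries, lseries_term_sub_mul_I w (zero_lt_one.trans hσ).ne',
    integral_count_eq_tsum, Complex.ofReal_tsum, ← Complex.ofReal_mul] using hseries

lemma hasSum_mul_rpow_neg_mul_fejerKernel (h : IsWienerIkehara w A G) (hT : 0 < T) {σ : ℝ}
    (hσ : 1 < σ) (y : ℝ) :
    HasSum (fun n : ℕ ↦ w n * (n : ℝ) ^ (-σ) * fejerKernel T (Real.log n - y))
      (A * (∫ u in Ioi 0, Real.exp (-(σ - 1) * u) * fejerKernel T (u - y)) +
        (fejerTransform T (fun t ↦ G (σ - t * Complex.I)) y).re) := by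
  have hσ0 : 0 < σ - 1 := sub_pos.2 hσ
  have hsum : Summable fun n : ℕ ↦ w n * (n : ℝ) ^ (-σ) * fejerKernel T (Real.log n - y) :=
    (h.summable_mul_rpow_neg hσ |>.mul_right T).of_nonneg_of_le
      (fun n ↦ mul_nonneg (mul_nonneg (h.nonneg n) (by positivity)) (fejerKernel_nonneg hT.le _))
      fun n ↦ mul_le_mul_of_nonneg_left (fejerKernel_le hT.le _)
        (mul_nonneg (h.nonneg n) (by positivity))
  have hdecomp (t : ℝ) : LSeries (fun n ↦ (w n : ℂ)) (σ - t * Complex.I) =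
      A * (((σ - 1 : ℝ) : ℂ) - t * Complex.I)⁻¹ + G (σ - t * Complex.I) := by
    rw [h.eqOn (show 1 < (σ - t * Complex.I : ℂ).re by simpa using hσ), ← div_eq_mul_inv]
    push_cast
    ring
  have hpole : Continuous fun t : ℝ ↦ (((σ - 1 : ℝ) : ℂ) - t * Complex.I)⁻¹ :=
    Continuous.inv₀ (by fun_prop) fun t ht ↦ by simpa [hσ0.ne'] using congr_arg Complex.re ht
  have hG : Continuous fun t : ℝ ↦ G (σ - t * Complex.I) :=
    h.continuousOn.comp_continuous (by fun_prop) fun t ↦ by simpa using hσ.le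
  have htransform := h.fejerTransform_lseries hT hσ y
  simp only [hdecomp, fejerTransform_const_mul_add hpole hG,
    fejerTransform_inv_sub_mul_I hT hσ0] at htransform
  rw [hsum.hasSum_iff, ← Complex.ofReal_re (∑' _, _), ← htransform]
  simp

lemma tendsto_fejerTransform_nhdsGT_one (h : IsWienerIkehara w A G) (T y : ℝ) :
    Tendsto (fun σ : ℝ ↦ fejerTransform T (fun t ↦ G (σ - t * Complex.I)) y) (𝓝[>] 1)
      (𝓝 (fejerTransform T (fun t ↦ G (1 - t * Complex.I)) y)) := by
  have hcont : Continuous fun p : ℝ × ℝ ↦ G ((max 1 p.1 : ℝ) - p.2 * Complex.I) :=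
    h.continuousOn.comp_continuous (by fun_prop) fun p ↦ by simp
  have hlim := (continuous_fejerTransform_of_continuous_uncurry
    (F := fun σ t ↦ G ((max 1 σ : ℝ) - t * Complex.I)) hcont T y).tendsto 1
  rw [max_self, Complex.ofReal_one] at hlim
  refine (hlim.mono_left nhdsWithin_le_nhds).congr' ?_
  filter_upwards [self_mem_nhdsWithin] with σ hσ
  rw [max_eq_right (le_of_lt hσ)]

lemma hasSum_div_mul_fejerKernel (h : IsWienerIkehara w A G) (hT : 0 < T) (y : ℝ) :
    HasSum (fun n : ℕ ↦ w n / n * fejerKernel T (Real.log n - y))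
      (A * (∫ u in Ioi 0, fejerKernel T (u - y)) +
        (fejerTransform T (fun t ↦ G (1 - t * Complex.I)) y).re) := by
  have hmain : Tendsto (fun σ : ℝ ↦
      ∫ u in Ioi 0, Real.exp (-(σ - 1) * u) * fejerKernel T (u - y)) (𝓝[>] 1)
      (𝓝 (∫ u in Ioi 0, fejerKernel T (u - y))) := by
    refine (tendsto_integral_exp_neg_mul_Ioi
      ((integrable_fejerKernel hT).comp_sub_right y).integrableOn).comp ?_
    refine tendsto_nhdsWithin_iff.2 ⟨?_, eventually_nhdsWithin_of_forall fun σ hσ ↦ ?_⟩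
    · exact ((continuous_sub_right 1).tendsto' 1 0 (sub_self 1)).mono_left nhdsWithin_le_nhds
    · simpa using hσ
  have herror := (Complex.continuous_re.tendsto _).comp (h.tendsto_fejerTransform_nhdsGT_one T y)
  have hsum := hasSum_div_natCast_of_tendsto
    (c := fun n ↦ w n * fejerKernel T (Real.log n - y))
    (fun n ↦ mul_nonneg (h.nonneg n) (fejerKernel_nonneg hT.le _))
    (fun σ hσ ↦ by
      simpa only [mul_right_comm] using! h.hasSum_mul_rpow_neg_mul_fejerKernel hT hσ y)
    ((hmain.const_mul A).add herror)
  simpa only [div_mul_eq_mul_div] using hsum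

lemma tendsto_tsum_div_mul_fejerKernel (h : IsWienerIkehara w A G) (hT : 0 < T) :
    Tendsto (fun y ↦ ∑' n : ℕ, w n / n * fejerKernel T (Real.log n - y)) atTop
      (𝓝 (A * ∫ u, fejerKernel T u)) := by
  have hmain := (tendsto_setIntegral_Ioi_comp_sub (integrable_fejerKernel hT)).const_mul A
  have herror : Tendsto (fun y ↦ (fejerTransform T (fun t ↦ G (1 - t * Complex.I)) y).re) atTop
      (𝓝 0) :=
    (Complex.continuous_re.tendsto' 0 0 Complex.zero_re).comp (tendsto_fejerTransform_atTop T _)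
  simpa only [(h.hasSum_div_mul_fejerKernel hT _).tsum_eq, add_zero] using hmain.add herror

lemma div_natCast_nonneg (h : IsWienerIkehara w A G) (n : ℕ) : 0 ≤ w n / n :=
  div_nonneg (h.nonneg n) n.cast_nonneg

lemma div_mul_inv_one_add_sq_le (h : IsWienerIkehara w A G) (y : ℝ) (n : ℕ) :
    w n / n * (1 + (Real.log n - y) ^ 2)⁻¹ ≤
      6 * (w n / n * fejerKernel 1 (Real.log n - y) +
        w n / n * fejerKernel 1 (Real.log n - (y + Real.pi))) := by
  rw [← mul_add, mul_left_comm, ← sub_sub]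
  exact mul_le_mul_of_nonneg_left (inv_one_add_sq_le_fejerKernel_add _) (h.div_natCast_nonneg n)

lemma summable_div_mul_inv_one_add_sq (h : IsWienerIkehara w A G) (y : ℝ) :
    Summable fun n : ℕ ↦ w n / n * (1 + (Real.log n - y) ^ 2)⁻¹ :=
  (((h.hasSum_div_mul_fejerKernel one_pos y).summable.add
    (h.hasSum_div_mul_fejerKernel one_pos _).summable).mul_left 6).of_nonneg_of_le
      (fun n ↦ mul_nonneg (h.div_natCast_nonneg n) (by positivity))
      (h.div_mul_inv_one_add_sq_le y)

lemma eventually_tsum_div_mul_inv_one_add_sq_le (h : IsWienerIkehara w A G) (hA : 0 < A) :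
    ∀ᶠ y in atTop, ∑' n : ℕ, w n / n * (1 + (Real.log n - y) ^ 2)⁻¹ ≤
      18 * (A * ∫ u, fejerKernel 1 u) := by
  have hlim := h.tendsto_tsum_div_mul_fejerKernel one_pos
  have hshift := hlim.comp (tendsto_atTop_add_const_right atTop Real.pi tendsto_id)
  have hpos : 0 < A * ∫ u, fejerKernel 1 u := mul_pos hA (integral_fejerKernel_pos one_pos)
  filter_upwards [((hlim.add hshift).const_mul 6).eventually_le_const
    (show _ < 18 * (A * ∫ u, fejerKernel 1 u) by linarith)] with y hy
  have hsum := h.hasSum_div_mul_fejerKernel one_pos y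
  have hsum' := h.hasSum_div_mul_fejerKernel one_pos (y + Real.pi)
  refine (hasSum_le (h.div_mul_inv_one_add_sq_le y)
    (h.summable_div_mul_inv_one_add_sq y).hasSum ((hsum.add hsum').mul_left 6)).trans ?_
  simpa only [hsum.tsum_eq, hsum'.tsum_eq, Function.comp_apply, id_eq] using hy

lemma eventually_sum_Ioc_floor_le (h : IsWienerIkehara w A G) (hA : 0 < A) :
    ∀ᶠ x : ℝ in atTop, ∑ n ∈ Finset.Ioc 0 ⌊x⌋₊, w n ≤ 36 * (∫ u, fejerKernel 1 u) * A * x := by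
  have hlog := Real.tendsto_log_atTop.eventually (h.eventually_tsum_div_mul_inv_one_add_sq_le hA)
  filter_upwards [hlog, eventually_gt_atTop 0] with x hx hx0
  have hterm : ∀ n ∈ Finset.Ioc 0 ⌊x⌋₊,
      w n ≤ 2 * x * (w n / n * (1 + (Real.log n - Real.log x) ^ 2)⁻¹) := by
    intro n hn
    obtain ⟨hn0, hnx⟩ := Finset.mem_Ioc.1 hn
    have hn0' : (0 : ℝ) < n := Nat.cast_pos.2 hn0
    have hexp : (n : ℝ) / x ≤ 2 * (1 + (Real.log n - Real.log x) ^ 2)⁻¹ := by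
      rw [← Real.exp_log (div_pos hn0' hx0), Real.log_div hn0'.ne' hx0.ne']
      exact exp_le_two_mul_inv_one_add_sq
        (sub_nonpos.2 (Real.log_le_log hn0' ((Nat.le_floor_iff hx0.le).1 hnx)))
    calc w n = x * (w n / n) * (n / x) := by field_simp
      _ ≤ x * (w n / n) * (2 * (1 + (Real.log n - Real.log x) ^ 2)⁻¹) :=
          mul_le_mul_of_nonneg_left hexp (mul_nonneg hx0.le (h.div_natCast_nonneg n))
      _ = 2 * x * (w n / n * (1 + (Real.log n - Real.log x) ^ 2)⁻¹) := by ring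
  calc ∑ n ∈ Finset.Ioc 0 ⌊x⌋₊, w n
      ≤ ∑ n ∈ Finset.Ioc 0 ⌊x⌋₊, 2 * x * (w n / n * (1 + (Real.log n - Real.log x) ^ 2)⁻¹) :=
        Finset.sum_le_sum hterm
    _ ≤ 2 * x * ∑' n : ℕ, w n / n * (1 + (Real.log n - Real.log x) ^ 2)⁻¹ := by
        rw [← Finset.mul_sum]
        gcongr
        exact (h.summable_div_mul_inv_one_add_sq _).sum_le_tsum _
          fun n _ ↦ mul_nonneg (h.div_natCast_nonneg n) (by positivity)
    _ ≤ 2 * x * (18 * (A * ∫ u, fejerKernel 1 u)) := by gcongr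
    _ = 36 * (∫ u, fejerKernel 1 u) * A * x := by ring

lemma tsum_div_mul_fejerKernel_le (h : IsWienerIkehara w A G) (hT : 0 < T) {δ y : ℝ} (hδ : 0 < δ)
    {s : Finset ℕ} (hs : ∀ n : ℕ, n ≠ 0 → |Real.log n - y| < δ → n ∈ s) :
    ∑' n : ℕ, w n / n * fejerKernel T (Real.log n - y) ≤
      T * ∑ n ∈ s, w n / n +
        4 / T * (1 + 1 / δ ^ 2) * ∑' n : ℕ, w n / n * (1 + (Real.log n - y) ^ 2)⁻¹ := by
  have hnear : HasSum (fun n ↦ if n ∈ s then T * (w n / n) else 0) (T * ∑ n ∈ s, w n / n) := by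
    have hfinite : HasSum (fun n ↦ if n ∈ s then T * (w n / n) else 0)
        (∑ n ∈ s, if n ∈ s then T * (w n / n) else 0) :=
      hasSum_sum_of_ne_finset_zero fun n hn ↦ if_neg hn
    rwa [Finset.sum_ite_mem, Finset.inter_self, ← Finset.mul_sum] at hfinite
  refine hasSum_le (fun n ↦ ?_) (h.hasSum_div_mul_fejerKernel hT y).summable.hasSum
    (hnear.add ((h.summable_div_mul_inv_one_add_sq y).hasSum.mul_left _))
  have hw := h.div_natCast_nonneg n
  have htail : 0 ≤ 4 / T * (1 + 1 / δ ^ 2) * (w n / n * (1 + (Real.log n - y) ^ 2)⁻¹) := by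
    positivity
  split_ifs with hn
  · linarith [mul_le_mul_of_nonneg_left (fejerKernel_le hT.le (Real.log n - y)) hw]
  · rcases eq_or_ne n 0 with rfl | hn0
    · simp
    have hfar : δ ≤ |Real.log n - y| := not_lt.1 (mt (hs n hn0) hn)
    linarith [mul_le_mul_of_nonneg_left (fejerKernel_le_mul_inv_one_add_sq_of_le_abs hT hδ hfar) hw]

lemma exists_pos_eventually_le_sum_div (h : IsWienerIkehara w A G) (hA : 0 < A) {δ : ℝ}
    (hδ : 0 < δ) : ∃ κ > 0, ∀ᶠ y in atTop, ∀ s : Finset ℕ,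
      (∀ n : ℕ, n ≠ 0 → |Real.log n - y| < δ → n ∈ s) → κ ≤ ∑ n ∈ s, w n / n := by
  set I := A * ∫ u, fejerKernel 1 u
  have hIpos : 0 < I := mul_pos hA (integral_fejerKernel_pos one_pos)
  -- With this `T` the tail in `tsum_div_mul_fejerKernel_le` costs at most half of `I / 2`.
  set T := 288 * (1 + 1 / δ ^ 2) with hTdef
  have hT : 0 < T := by positivity
  have hlim := h.tendsto_tsum_div_mul_fejerKernel hT
  rw [integral_fejerKernel_eq hT] at hlim
  refine ⟨I / 4 / T, by positivity, ?_⟩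
  filter_upwards [hlim.eventually_const_le (half_lt_self hIpos),
    h.eventually_tsum_div_mul_inv_one_add_sq_le hA] with y hlower hupper s hs
  have hfar : 4 / T * (1 + 1 / δ ^ 2) * ∑' n : ℕ, w n / n * (1 + (Real.log n - y) ^ 2)⁻¹ ≤
      I / 4 :=
    calc _ ≤ 4 / T * (1 + 1 / δ ^ 2) * (18 * I) := by gcongr
      _ = I / 4 := by rw [hTdef]; field_simp; norm_num
  rw [div_le_iff₀' hT]
  linarith [h.tsum_div_mul_fejerKernel_le hT hδ hs]

lemma isBigO_sum_Icc (h : IsWienerIkehara w A G) (hA : 0 < A) {c : ℝ} (hc : 1 < c) :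
    (fun x : ℝ ↦ x) =O[atTop] fun x : ℝ ↦ ∑ n ∈ Finset.Icc ⌈x / c⌉₊ ⌊x⌋₊, w n := by
  have hlog : 0 < Real.log c := Real.log_pos hc
  obtain ⟨κ, hκ, hlower⟩ := h.exists_pos_eventually_le_sum_div hA (half_pos hlog)
  have hcenter : Tendsto (fun x ↦ Real.log x - Real.log c / 2) atTop atTop :=
    tendsto_atTop_add_const_right _ _ Real.tendsto_log_atTop
  refine IsBigO.of_bound (c / κ) ?_
  filter_upwards [hcenter.eventually hlower, eventually_gt_atTop 0] with x hx hx0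
  have hxc : 0 < x / c := by positivity
  have hnear : ∀ n : ℕ, n ≠ 0 → |Real.log n - (Real.log x - Real.log c / 2)| < Real.log c / 2 →
      n ∈ Finset.Icc ⌈x / c⌉₊ ⌊x⌋₊ := by
    intro n hn hlogn
    have hn' : (0 : ℝ) < n := Nat.cast_pos.2 (Nat.pos_of_ne_zero hn)
    rw [abs_lt] at hlogn
    rw [Finset.mem_Icc, Nat.ceil_le, Nat.le_floor_iff hx0.le]
    refine ⟨(Real.log_le_log_iff hxc hn').1 ?_, (Real.log_le_log_iff hn' hx0).1 (by linarith)⟩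
    rw [Real.log_div hx0.ne' (by positivity)]
    linarith
  have hdiv : ∑ n ∈ Finset.Icc ⌈x / c⌉₊ ⌊x⌋₊, w n / n ≤
      (∑ n ∈ Finset.Icc ⌈x / c⌉₊ ⌊x⌋₊, w n) / (x / c) := by
    rw [Finset.sum_div]
    refine Finset.sum_le_sum fun n hn ↦ ?_
    exact div_le_div_of_nonneg_left (h.nonneg n) hxc (Nat.ceil_le.1 (Finset.mem_Icc.1 hn).1)
  have hsum := (le_div_iff₀ hxc).1 ((hx _ hnear).trans hdiv)
  rw [Real.norm_of_nonneg hx0.le, Real.norm_of_nonneg (Finset.sum_nonneg fun n _ ↦ h.nonneg n),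
    div_mul_eq_mul_div, le_div_iff₀ hκ]
  calc x * κ = c * (κ * (x / c)) := by field_simp
    _ ≤ c * ∑ n ∈ Finset.Icc ⌈x / c⌉₊ ⌊x⌋₊, w n := by gcongr

end IsWienerIkehara

end WienerIkehara

section PrimesInResidueClasses

open scoped Finset
open ArithmeticFunction ArithmeticFunction.vonMangoldt

variable {q : ℕ} {a : ZMod q}

lemma isWienerIkehara_residueClass [NeZero q] (ha : IsUnit a) :
    IsWienerIkehara (residueClass a) (q.totient : ℝ)⁻¹ (LFunctionResidueClassAux a) where
  nonneg := residueClass_nonneg a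
  lseriesSummable hs := LSeriesSummable_of_abscissaOfAbsConv_lt_re <|
    (abscissaOfAbsConv_residueClass_le_one a).trans_lt (mod_cast hs)
  eqOn := by simpa using eqOn_LFunctionResidueClassAux ha
  continuousOn := continuousOn_LFunctionResidueClassAux a

lemma sqrt_mul_log_isLittleO : (fun x : ℝ ↦ √x * Real.log x) =o[atTop] fun x ↦ x := by
  have hlog : Real.log =o[atTop] fun x ↦ √x := by
    simpa only [Real.sqrt_eq_rpow] using isLittleO_log_rpow_atTop one_half_pos
  refine ((isBigO_refl (fun x ↦ √x) atTop).mul_isLittleO hlog).congr' .rfl ?_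
  filter_upwards [eventually_ge_atTop 0] with x hx using Real.mul_self_sqrt hx

lemma sum_residueClass_not_prime_le (a : ZMod q) {x : ℝ} (hx : 1 ≤ x) {s : Finset ℕ}
    (hs : s ⊆ Finset.Ioc 0 ⌊x⌋₊) :
    ∑ n ∈ s with ¬n.Prime, residueClass a n ≤ 2 * √x * Real.log x := by
  calc ∑ n ∈ s with ¬n.Prime, residueClass a n
      ≤ ∑ n ∈ Finset.Ioc 0 ⌊x⌋₊ with ¬n.Prime, vonMangoldt n :=
        (Finset.sum_le_sum fun n _ ↦ residueClass_le a n).trans <|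
          Finset.sum_le_sum_of_subset_of_nonneg (Finset.filter_subset_filter _ hs)
            fun n _ _ ↦ vonMangoldt_nonneg
    _ = Chebyshev.psi x - Chebyshev.theta x := (Chebyshev.psi_sub_theta_eq_sum_not_prime x).symm
    _ ≤ 2 * √x * Real.log x := Chebyshev.psi_sub_theta_le hx

lemma sum_residueClass_prime_le (a : ZMod q) {x : ℝ} {s : Finset ℕ}
    (hs : s ⊆ Finset.Ioc 0 ⌊x⌋₊) :
    ∑ n ∈ s with n.Prime, residueClass a n ≤
      #{p ∈ s | Nat.Prime p ∧ ((p : ℕ) : ZMod q) = a} * Real.log x := by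
  rw [← nsmul_eq_mul, ← Finset.sum_const, ← Finset.filter_filter,
    Finset.sum_filter (p := fun p : ℕ ↦ (p : ZMod q) = a)]
  refine Finset.sum_le_sum fun p hp ↦ ?_
  obtain ⟨hp0, hpx⟩ := Finset.mem_Ioc.1 (hs (Finset.mem_filter.1 hp).1)
  split_ifs with hpa
  · exact (residueClass_le a p).trans <| vonMangoldt_le_log.trans <|
      Real.log_le_log (mod_cast hp0) ((Nat.le_floor_iff' hp0.ne').1 hpx)
  · exact (indicator_of_notMem (s := {n : ℕ | (n : ZMod q) = a}) hpa _).le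

lemma eventually_Icc_ceil_div_subset_Ioc {c : ℝ} (hc : 0 < c) :
    ∀ᶠ x : ℝ in atTop, Finset.Icc ⌈x / c⌉₊ ⌊x⌋₊ ⊆ Finset.Ioc 0 ⌊x⌋₊ := by
  filter_upwards [eventually_gt_atTop 0] with x hx n hn
  have hnx := Finset.mem_Icc.1 hn
  exact Finset.mem_Ioc.2 ⟨(Nat.ceil_pos.2 (by positivity)).trans_le hnx.1, hnx.2⟩

lemma isBigO_sum_residueClass_prime [NeZero q] (ha : IsUnit a) {c : ℝ} (hc : 1 < c) :
    (fun x : ℝ ↦ x) =O[atTop]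
      fun x ↦ ∑ n ∈ Finset.Icc ⌈x / c⌉₊ ⌊x⌋₊ with n.Prime, residueClass a n := by
  set s : ℝ → Finset ℕ := fun x ↦ Finset.Icc ⌈x / c⌉₊ ⌊x⌋₊
  have hsum : (fun x : ℝ ↦ x) =O[atTop] fun x ↦ ∑ n ∈ s x, residueClass a n :=
    (isWienerIkehara_residueClass ha).isBigO_sum_Icc
      (inv_pos.2 (mod_cast Nat.totient_pos.2 (NeZero.pos q))) hc
  have hnotPrime : (fun x ↦ ∑ n ∈ s x with ¬n.Prime, residueClass a n) =o[atTop]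
      fun x ↦ ∑ n ∈ s x, residueClass a n := by
    refine IsBigO.trans_isLittleO (.of_bound 2 ?_) (sqrt_mul_log_isLittleO.trans_isBigO hsum)
    filter_upwards [eventually_Icc_ceil_div_subset_Ioc (one_pos.trans hc), eventually_ge_atTop 1]
      with x hsx hx
    rw [Real.norm_of_nonneg (Finset.sum_nonneg fun n _ ↦ residueClass_nonneg a n),
      Real.norm_of_nonneg (mul_nonneg (Real.sqrt_nonneg x) (Real.log_nonneg hx)), ← mul_assoc]
    exact sum_residueClass_not_prime_le a hx hsx
  have hprime : (fun x ↦ ∑ n ∈ s x with n.Prime, residueClass a n) ~[atTop]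
      fun x ↦ ∑ n ∈ s x, residueClass a n := by
    refine hnotPrime.neg_left.congr_left fun x ↦ ?_
    simp only [Pi.sub_apply, ← Finset.sum_filter_add_sum_filter_not (s x) Nat.Prime]
    ring
  exact hsum.trans hprime.isBigO_symm

lemma div_log_isBigO_card_primes_residueClass [NeZero q] (ha : IsUnit a) {c : ℝ} (hc : 1 < c) :
    (fun x : ℝ ↦ x / Real.log x) =O[atTop]
      fun x ↦ (#{p ∈ Finset.Icc ⌈x / c⌉₊ ⌊x⌋₊ | Nat.Prime p ∧ ((p : ℕ) : ZMod q) = a} : ℝ) := by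
  have hlog : (fun x : ℝ ↦ x) =O[atTop] fun x ↦
      (#{p ∈ Finset.Icc ⌈x / c⌉₊ ⌊x⌋₊ | Nat.Prime p ∧ ((p : ℕ) : ZMod q) = a} : ℝ) *
        Real.log x := by
    refine (isBigO_sum_residueClass_prime ha hc).trans (IsBigO.of_norm_eventuallyLE ?_)
    filter_upwards [eventually_Icc_ceil_div_subset_Ioc (one_pos.trans hc)] with x hsx
    rw [Real.norm_of_nonneg (Finset.sum_nonneg fun n _ ↦ residueClass_nonneg a n)]
    exact sum_residueClass_prime_le a hsx
  refine (hlog.mul (isBigO_refl (fun x ↦ (Real.log x)⁻¹) atTop)).congr'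
    (.of_forall fun x ↦ (div_eq_mul_inv _ _).symm) ?_
  filter_upwards [eventually_gt_atTop 1] with x hx
  exact mul_inv_cancel_right₀ (Real.log_pos hx).ne' _

lemma div_log_isBigO_card_primes {c : ℝ} (hc : 1 < c) :
    (fun x : ℝ ↦ x / Real.log x) =O[atTop]
      fun x ↦ (#{p ∈ Finset.Icc ⌈x / c⌉₊ ⌊x⌋₊ | p.Prime} : ℝ) := by
  simpa [Subsingleton.elim _ (1 : ZMod 1)] using
    div_log_isBigO_card_primes_residueClass (isUnit_one (M := ZMod 1)) hc

end PrimesInResidueClasses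

section PrimePairs

open scoped Finset
open ArithmeticFunction ArithmeticFunction.vonMangoldt

/-- The residues modulo `Q` that sieving by the prime factors of `Q` leaves for the smaller member
of a pair `p`, `p + h` of primes. -/
def unitPairs (Q h : ℕ) : Set (ZMod Q) := {r | IsUnit r ∧ IsUnit (r + h)}

lemma image_chineseRemainder_unitPairs {m n : ℕ} (h : ℕ) (hmn : m.Coprime n) :
    ZMod.chineseRemainder hmn '' unitPairs (m * n) h = unitPairs m h ×ˢ unitPairs n h := by
  rw [show ⇑(ZMod.chineseRemainder hmn) = (ZMod.chineseRemainder hmn).toEquiv from rfl,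
    Equiv.image_eq_preimage_symm]
  ext r
  have hunit (s : ZMod m × ZMod n) :
      IsUnit ((ZMod.chineseRemainder hmn).symm s) ↔ IsUnit s.1 ∧ IsUnit s.2 := by
    rw [MulEquiv.isUnit_map, Prod.isUnit_iff]
  have hadd :
      (ZMod.chineseRemainder hmn).symm r + h = (ZMod.chineseRemainder hmn).symm (r + h) := by
    rw [map_add, map_natCast]
  change IsUnit ((ZMod.chineseRemainder hmn).symm r) ∧
    IsUnit ((ZMod.chineseRemainder hmn).symm r + h) ↔ _
  rw [hadd, hunit, hunit]
  exact and_and_and_comm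

lemma ncard_unitPairs_mul {m n : ℕ} (h : ℕ) (hmn : m.Coprime n) :
    (unitPairs (m * n) h).ncard = (unitPairs m h).ncard * (unitPairs n h).ncard := by
  rw [← ncard_prod, ← image_chineseRemainder_unitPairs h hmn,
    ncard_image_of_injective _ (ZMod.chineseRemainder hmn).injective]

lemma ncard_unitPairs_add_two_of_prime {p h : ℕ} (hp : p.Prime) (hph : ¬p ∣ h) :
    (unitPairs p h).ncard + 2 = p := by
  have : Fact p.Prime := ⟨hp⟩
  have hh : (0 : ZMod p) ≠ -h := by
    rwa [ne_comm, neg_ne_zero, Ne, ZMod.natCast_eq_zero_iff]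
  have hcompl : (unitPairs p h)ᶜ = {0, -(h : ZMod p)} := by
    ext r
    simp only [unitPairs, isUnit_iff_ne_zero, mem_compl_iff, mem_ofPred_eq, mem_insert_iff,
      mem_singleton_iff, eq_neg_iff_add_eq_zero]
    tauto
  rw [← ncard_pair hh, ← hcompl, ncard_add_ncard_compl, Nat.card_zmod]

lemma ncard_unitPairs_prod_le {h : ℕ} {s : Finset ℕ} (hs : ∀ p ∈ s, p.Prime ∧ ¬p ∣ h) :
    ((unitPairs (∏ p ∈ s, p) h).ncard : ℝ) ≤
      (∏ p ∈ s, (1 - 1 / (p : ℝ))) * (∏ p ∈ s, p).totient := by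
  induction s using Finset.induction_on with
  | empty => simpa using ncard_le_one_of_subsingleton (unitPairs 1 h)
  | insert p s hps ih =>
    rw [Finset.forall_mem_insert] at hs
    obtain ⟨⟨hp, hph⟩, hs⟩ := hs
    have hcop : p.Coprime (∏ r ∈ s, r) := .prod_right fun r hr ↦
      (Nat.coprime_primes hp (hs r hr).1).2 fun hpr ↦ hps (hpr ▸ hr)
    have hp2 : (2 : ℝ) ≤ p := mod_cast hp.two_le
    have hcard : ((unitPairs p h).ncard : ℝ) ≤ (1 - 1 / (p : ℝ)) * (p - 1) := by
      have hadd : ((unitPairs p h).ncard : ℝ) + 2 = p :=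
        mod_cast ncard_unitPairs_add_two_of_prime hp hph
      have hexpand : (1 - 1 / (p : ℝ)) * (p - 1) = p - 2 + 1 / p := by field_simp; ring
      rw [hexpand, ← hadd, add_sub_cancel_right]
      exact le_add_of_nonneg_right (by positivity)
    rw [Finset.prod_insert hps, Finset.prod_insert hps, ncard_unitPairs_mul h hcop,
      Nat.totient_mul hcop, Nat.totient_prime hp]
    push_cast [hp.one_le]
    rw [mul_mul_mul_comm]
    exact mul_le_mul hcard (ih hs) (by positivity) ((Nat.cast_nonneg _).trans hcard)

lemma exists_finset_prod_one_sub_le {ι : Type*} {f : ι → ℝ} (hf₀ : ∀ i, 0 ≤ f i)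
    (hf₁ : ∀ i, f i ≤ 1) (hf : ¬Summable f) {ε : ℝ} (hε : 0 < ε) :
    ∃ s : Finset ι, ∏ i ∈ s, (1 - f i) ≤ ε := by
  by_contra! hlarge
  refine hf (summable_of_sum_le (c := -Real.log ε) hf₀ fun s ↦ ?_)
  have hexp : ε ≤ Real.exp (-∑ i ∈ s, f i) :=
    calc ε ≤ ∏ i ∈ s, (1 - f i) := (hlarge s).le
      _ ≤ ∏ i ∈ s, Real.exp (-f i) :=
        Finset.prod_le_prod (fun i _ ↦ sub_nonneg.2 (hf₁ i)) fun i _ ↦ Real.one_sub_le_exp_neg _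
      _ = Real.exp (-∑ i ∈ s, f i) := by rw [← Real.exp_sum, Finset.sum_neg_distrib]
  linarith [(Real.log_le_iff_le_exp hε).2 hexp]

lemma not_summable_one_div_primes_not_dvd {h : ℕ} (hh : h ≠ 0) :
    ¬Summable fun p : {p : ℕ // p.Prime ∧ ¬p ∣ h} ↦ 1 / ((p : ℕ) : ℝ) := by
  intro hsum
  refine not_summable_one_div_on_primes ?_
  have hind := (summable_subtype_iff_indicator (f := fun n : ℕ ↦ 1 / (n : ℝ))
    (s := {p | p.Prime ∧ ¬p ∣ h})).1 hsum
  refine (summable_congr_cofinite ?_).1 hind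
  filter_upwards [h.divisors.finite_toSet.compl_mem_cofinite] with p hp
  have hph : ¬p ∣ h := fun hdvd ↦ hp (Nat.mem_divisors.2 ⟨hdvd, hh⟩)
  simp [indicator_apply, hph]

lemma exists_ncard_unitPairs_le {h : ℕ} (hh : h ≠ 0) {ε : ℝ} (hε : 0 < ε) :
    ∃ Q ≠ 0, ((unitPairs Q h).ncard : ℝ) ≤ ε * Q.totient := by
  obtain ⟨s, hs⟩ := exists_finset_prod_one_sub_le (fun p ↦ by positivity)
    (fun p ↦ div_le_one_of_le₀ (mod_cast p.2.1.one_le) (by positivity))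
    (not_summable_one_div_primes_not_dvd hh) hε
  set t : Finset ℕ := s.map (.subtype _)
  have ht : ∀ p ∈ t, p.Prime ∧ ¬p ∣ h := fun p hp ↦ s.property_of_mem_map_subtype hp
  refine ⟨∏ p ∈ t, p, Finset.prod_ne_zero_iff.2 fun p hp ↦ (ht p hp).1.ne_zero,
    (ncard_unitPairs_prod_le ht).trans ?_⟩
  rw [Finset.prod_map]
  gcongr
  exact hs

lemma card_mul_log_le_sum_residueClass {Q h : ℕ} [NeZero Q] {y : ℝ} (hy : 0 < y) {s : Finset ℕ}
    (hs : ∀ p ∈ s, p.Prime ∧ (p + h).Prime) (hQ : ∀ p ∈ s, Q < p) (hys : ∀ p ∈ s, y ≤ p) :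
    #s * Real.log y ≤ ∑ r ∈ (unitPairs Q h).toFinite.toFinset, ∑ p ∈ s, residueClass r p := by
  rw [Finset.sum_comm, ← nsmul_eq_mul]
  refine Finset.card_nsmul_le_sum _ _ _ fun p hp ↦ ?_
  have hunit {m : ℕ} (hm : m.Prime) (hpm : p ≤ m) : IsUnit (m : ZMod Q) :=
    (ZMod.isUnit_iff_coprime m Q).2
      (Nat.coprime_of_lt_prime (NeZero.ne Q) ((hQ p hp).trans_le hpm) hm)
  have hpair : (p : ZMod Q) ∈ unitPairs Q h :=
    ⟨hunit (hs p hp).1 le_rfl, mod_cast hunit (hs p hp).2 (Nat.le_add_right p h)⟩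
  calc Real.log y ≤ Real.log p := Real.log_le_log hy (hys p hp)
    _ = residueClass (p : ZMod Q) p := by
      rw [residueClass, indicator_of_mem (by simp), vonMangoldt_apply_prime (hs p hp).1]
    _ ≤ ∑ r ∈ (unitPairs Q h).toFinite.toFinset, residueClass r p :=
      Finset.single_le_sum (f := fun r ↦ residueClass r p) (fun r _ ↦ residueClass_nonneg r p)
        ((Set.Finite.mem_toFinset _).2 hpair)

lemma eventually_sum_unitPairs_residueClass_le (Q h : ℕ) [NeZero Q] : ∀ᶠ x : ℝ in atTop,
    ∑ r ∈ (unitPairs Q h).toFinite.toFinset, ∑ n ∈ Finset.Ioc 0 ⌊x⌋₊, residueClass r n ≤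
      (unitPairs Q h).ncard * (36 * (∫ u, fejerKernel 1 u) * (Q.totient : ℝ)⁻¹ * x) := by
  have hφ : 0 < (Q.totient : ℝ) := mod_cast Nat.totient_pos.2 (NeZero.pos Q)
  have hclass (r) (hr : r ∈ (unitPairs Q h).toFinite.toFinset) :=
    (isWienerIkehara_residueClass ((Set.Finite.mem_toFinset _).1 hr).1).eventually_sum_Ioc_floor_le
      (inv_pos.2 hφ)
  filter_upwards [(Finset.eventually_all _).2 hclass] with x hx
  rw [ncard_eq_toFinset_card _ (unitPairs Q h).toFinite, ← nsmul_eq_mul]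
  exact Finset.sum_le_card_nsmul _ _ _ hx

lemma card_filter_Ioc_zero_le (P : ℕ → Prop) [DecidablePred P] (m n : ℕ) :
    #{k ∈ Finset.Ioc 0 n | P k} ≤ m + #{k ∈ Finset.Ioc m n | P k} :=
  calc #{k ∈ Finset.Ioc 0 n | P k}
      ≤ #(Finset.Ioc 0 m ∪ {k ∈ Finset.Ioc m n | P k}) := by
        refine Finset.card_le_card fun k hk ↦ ?_
        simp only [Finset.mem_union, Finset.mem_filter, Finset.mem_Ioc] at hk ⊢
        grind
    _ ≤ m + #{k ∈ Finset.Ioc m n | P k} := by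
        simpa using Finset.card_union_le (Finset.Ioc 0 m) {k ∈ Finset.Ioc m n | P k}

lemma card_large_prime_pairs_mul_log_isLittleO {h : ℕ} (hh : h ≠ 0) :
    (fun x : ℝ ↦ (#{p ∈ Finset.Ioc ⌊√x⌋₊ ⌊x⌋₊ | p.Prime ∧ (p + h).Prime} : ℝ) * Real.log x)
      =o[atTop] fun x ↦ x := by
  refine isLittleO_iff.2 fun ε hε ↦ ?_
  set C := 36 * ∫ u, fejerKernel 1 u
  have hC : 0 < C := mul_pos (by norm_num) (integral_fejerKernel_pos one_pos)
  obtain ⟨Q, hQ, hcard⟩ := exists_ncard_unitPairs_le hh (ε := ε / (2 * C)) (by positivity)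
  have : NeZero Q := ⟨hQ⟩
  have hφ : 0 < (Q.totient : ℝ) := mod_cast Nat.totient_pos.2 (NeZero.pos Q)
  filter_upwards [eventually_sum_unitPairs_residueClass_le Q h, eventually_gt_atTop 1,
    Real.tendsto_sqrt_atTop.eventually_gt_atTop (Q : ℝ)] with x hclasses hx1 hxQ
  set s : Finset ℕ := {p ∈ Finset.Ioc ⌊√x⌋₊ ⌊x⌋₊ | p.Prime ∧ (p + h).Prime}
  have hlarge (p) (hp : p ∈ s) : √x < p :=
    Nat.lt_of_floor_lt (Finset.mem_Ioc.1 (Finset.mem_filter.1 hp).1).1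
  have hsub : s ⊆ Finset.Ioc 0 ⌊x⌋₊ :=
    (Finset.filter_subset _ _).trans (Finset.Ioc_subset_Ioc_left (Nat.zero_le _))
  have hlog : #s * (Real.log x / 2) ≤ ε / 2 * x :=
    calc #s * (Real.log x / 2) = #s * Real.log √x := by rw [Real.log_sqrt (by positivity)]
      _ ≤ ∑ r ∈ (unitPairs Q h).toFinite.toFinset, ∑ p ∈ s, residueClass r p :=
        card_mul_log_le_sum_residueClass (by positivity) (fun p hp ↦ (Finset.mem_filter.1 hp).2)
          (fun p hp ↦ mod_cast hxQ.trans (hlarge p hp)) fun p hp ↦ (hlarge p hp).le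
      _ ≤ ∑ r ∈ (unitPairs Q h).toFinite.toFinset,
          ∑ n ∈ Finset.Ioc 0 ⌊x⌋₊, residueClass r n :=
        Finset.sum_le_sum fun r _ ↦ Finset.sum_le_sum_of_subset_of_nonneg hsub
          fun n _ _ ↦ residueClass_nonneg r n
      _ ≤ (unitPairs Q h).ncard * (C * (Q.totient : ℝ)⁻¹ * x) := hclasses
      _ ≤ ε / (2 * C) * Q.totient * (C * (Q.totient : ℝ)⁻¹ * x) := by gcongr
      _ = ε / 2 * x := by field_simp
  rw [Real.norm_of_nonneg (mul_nonneg (by positivity) (Real.log_nonneg hx1.le)),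
    Real.norm_of_nonneg (by positivity)]
  linarith

lemma card_prime_pairs_isLittleO {h : ℕ} (hh : h ≠ 0) :
    (fun x : ℝ ↦ (#{p ∈ Finset.Ioc 0 ⌊x⌋₊ | p.Prime ∧ (p + h).Prime} : ℝ))
      =o[atTop] fun x ↦ x / Real.log x := by
  have hlog : (fun x : ℝ ↦
      (#{p ∈ Finset.Ioc 0 ⌊x⌋₊ | p.Prime ∧ (p + h).Prime} : ℝ) * Real.log x) =o[atTop]
        fun x ↦ x := by
    refine IsBigO.trans_isLittleO (IsBigO.of_norm_eventuallyLE ?_)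
      (sqrt_mul_log_isLittleO.add (card_large_prime_pairs_mul_log_isLittleO hh))
    filter_upwards [eventually_ge_atTop 1] with x hx
    have hlogx := Real.log_nonneg hx
    rw [Real.norm_of_nonneg (by positivity), ← add_mul]
    gcongr
    calc (#{p ∈ Finset.Ioc 0 ⌊x⌋₊ | p.Prime ∧ (p + h).Prime} : ℝ)
        ≤ ⌊√x⌋₊ + #{p ∈ Finset.Ioc ⌊√x⌋₊ ⌊x⌋₊ | p.Prime ∧ (p + h).Prime} :=
          mod_cast card_filter_Ioc_zero_le _ _ _
      _ ≤ √x + #{p ∈ Finset.Ioc ⌊√x⌋₊ ⌊x⌋₊ | p.Prime ∧ (p + h).Prime} := by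
          gcongr
          exact Nat.floor_le (Real.sqrt_nonneg x)
  refine (hlog.mul_isBigO (isBigO_refl (fun x ↦ (Real.log x)⁻¹) atTop)).congr' ?_
    (.of_forall fun x ↦ (div_eq_mul_inv _ _).symm)
  filter_upwards [eventually_gt_atTop 1] with x hx
  exact mul_inv_cancel_right₀ (Real.log_pos hx).ne' _

end PrimePairs

section Autocorrelation

open scoped Finset

lemma sum_sum_comp_sub_eq_sum_card_smul {G M : Type*} [AddCommGroup G] [DecidableEq G]
    [AddCommMonoid M] {f : G → M} {D : Finset G} (hD : ∀ h ∉ D, f h = 0) (S : Finset G) :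
    ∑ x ∈ S, ∑ y ∈ S, f (x - y) = ∑ h ∈ D, #{y ∈ S | y + h ∈ S} • f h := by
  have hdiff (x y : G) : f (x - y) = ∑ h ∈ D, if y + h = x then f h else 0 := by
    simp only [← eq_sub_iff_add_eq', Finset.sum_ite_eq']
    split_ifs with hxy
    · rfl
    · exact hD _ hxy
  simp only [hdiff]
  rw [Finset.sum_comm, Finset.sum_congr rfl fun y _ ↦ Finset.sum_comm, Finset.sum_comm]
  simp [Finset.sum_ite]

lemma card_filter_add_neg_mem {G : Type*} [AddGroup G] [DecidableEq G] (S : Finset G) (h : G) :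
    #{x ∈ S | x + -h ∈ S} = #{x ∈ S | x + h ∈ S} :=
  Finset.card_bij' (fun x _ ↦ x + -h) (fun x _ ↦ x + h) (by simp +contextual) (by simp +contextual)
    (by simp) (by simp)

lemma card_filter_add_mem_map_castEmbedding (S : Finset ℕ) (h : ℤ) :
    #{x ∈ S.map (Nat.castEmbedding (R := ℤ)) | x + h ∈ S.map Nat.castEmbedding} =
      #{p ∈ S | p + h.natAbs ∈ S} := by
  wlog hh : 0 ≤ h generalizing h
  · rw [← card_filter_add_neg_mem, this (-h) (by lia), Int.natAbs_neg]
  lift h to ℕ using hh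
  rw [Finset.filter_map, Finset.card_map]
  congr! 2 with p
  exact Finset.mem_map' (a := p + h) Nat.castEmbedding

lemma autoCorr_intCast_image (S : Finset ℤ) (f : ℝ → ℂ) :
    autoCorr ((↑) '' (S : Set ℤ)) f = (#S : ℂ)⁻¹ * ∑ x ∈ S, ∑ y ∈ S, f ((x - y : ℤ) : ℝ) := by
  simp only [autoCorr, finsum_mem_image Int.cast_injective.injOn, finsum_mem_coe_finset,
    ncard_image_of_injective _ Int.cast_injective, ncard_coe_finset, Int.cast_sub]

lemma tendsto_autoCorr_of_card_filter_add_mem_isLittleO {ι : Type*} {l : Filter ι}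
    {S : ι → Finset ℤ} (hS : ∀ᶠ i in l, (S i).Nonempty)
    (hpairs : ∀ h ≠ 0, (fun i ↦ (#{x ∈ S i | x + h ∈ S i} : ℝ)) =o[l] fun i ↦ (#(S i) : ℝ))
    {f : ℝ → ℂ} (hf : HasCompactSupport f) :
    Tendsto (fun i ↦ autoCorr ((↑) '' (S i : Set ℤ)) f) l (𝓝 (f 0)) := by
  have hfin : ((↑) ⁻¹' tsupport f : Set ℤ).Finite :=
    (Int.isClosedEmbedding_coe_real.isCompact_preimage hf).finite_of_discrete
  set D := hfin.toFinset
  have hD (h : ℤ) (hh : h ∉ D) : f h = 0 :=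
    image_eq_zero_of_notMem_tsupport fun hmem ↦ hh (hfin.mem_toFinset.2 hmem)
  have hratio (h : ℤ) : Tendsto (fun i ↦ ((#{x ∈ S i | x + h ∈ S i} / #(S i) : ℝ) : ℂ)) l
      (𝓝 (if h = 0 then 1 else 0)) := by
    split_ifs with hh
    · refine tendsto_const_nhds.congr' ?_
      filter_upwards [hS] with i hi
      simp [hh, hi.card_ne_zero]
    · exact_mod_cast (Complex.continuous_ofReal.tendsto 0).comp (hpairs h hh).tendsto_div_nhds_zero
  have hsum := tendsto_finsetSum D fun h _ ↦ (hratio h).mul_const (f h)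
  have hlim : ∑ h ∈ D, (if h = 0 then 1 else 0) * f h = f 0 := by
    simpa using fun h0 ↦ (hD 0 h0).symm
  rw [hlim] at hsum
  refine hsum.congr fun i ↦ ?_
  rw [autoCorr_intCast_image, sum_sum_comp_sub_eq_sum_card_smul hD, Finset.mul_sum]
  refine Finset.sum_congr rfl fun h _ ↦ ?_
  push_cast [nsmul_eq_mul]
  ring

/-- The primes in the real interval `[a, b]`, as a finset so that they can be counted. -/
noncomputable def primesIcc (a b : ℝ) : Finset ℕ := {p ∈ Finset.Icc ⌈a⌉₊ ⌊b⌋₊ | p.Prime}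

lemma mem_primesIcc {a b : ℝ} {p : ℕ} : p ∈ primesIcc a b ↔ p.Prime ∧ (p : ℝ) ∈ Icc a b := by
  rw [primesIcc, Finset.mem_filter, Finset.mem_Icc, Nat.ceil_le, and_comm]
  exact and_congr_right fun hp ↦ and_congr_right fun _ ↦ Nat.le_floor_iff' hp.ne_zero

lemma primesR_inter_Icc {a : ℝ} (ha : 0 < a) (b : ℝ) :
    PrimesR ∩ Icc a b = (↑) '' ((primesIcc a b).map (Nat.castEmbedding (R := ℤ)) : Set ℤ) := by
  rw [Finset.coe_map, image_image]
  ext x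
  constructor
  · rintro ⟨⟨p, hp, rfl | rfl⟩, hx⟩
    · exact ⟨p, mem_primesIcc.2 ⟨hp, hx⟩, by simp⟩
    · exact absurd (ha.trans_le hx.1) (by simp)
  · rintro ⟨p, hp, rfl⟩
    obtain ⟨hp, hx⟩ := mem_primesIcc.1 hp
    exact ⟨⟨p, hp, .inl (by simp)⟩, by simpa using hx⟩

variable {ι : Type*} {l : Filter ι} {a b : ι → ℝ} {c : ℝ}

lemma div_log_isBigO_card_primesIcc (hb : Tendsto b l atTop) (hc : 1 < c)
    (hab : ∀ᶠ i in l, c * a i ≤ b i) :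
    (fun i ↦ b i / Real.log (b i)) =O[l] fun i ↦ (#(primesIcc (a i) (b i)) : ℝ) := by
  refine ((div_log_isBigO_card_primes hc).comp_tendsto hb).trans
    (IsBigO.of_norm_eventuallyLE ?_)
  filter_upwards [hab] with i hi
  have hai : a i ≤ b i / c := (le_div_iff₀' (one_pos.trans hc)).2 hi
  simp only [Function.comp_apply, Real.norm_natCast]
  gcongr
  exact Finset.filter_subset_filter _ (Finset.Icc_subset_Icc_left (Nat.ceil_mono hai))

lemma card_filter_add_mem_primesIcc_isLittleO (hb : Tendsto b l atTop) {h : ℕ} (hh : h ≠ 0) :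
    (fun i ↦ (#{p ∈ primesIcc (a i) (b i) | p + h ∈ primesIcc (a i) (b i)} : ℝ)) =o[l]
      fun i ↦ b i / Real.log (b i) := by
  refine IsBigO.trans_isLittleO (IsBigO.of_norm_le fun i ↦ ?_)
    ((card_prime_pairs_isLittleO hh).comp_tendsto hb)
  simp only [Function.comp_apply, Real.norm_natCast, Nat.cast_le]
  refine Finset.card_le_card fun p hp ↦ ?_
  obtain ⟨hp, hph⟩ := Finset.mem_filter.1 hp
  have hprime := (mem_primesIcc.1 hp).1
  exact Finset.mem_filter.2 ⟨Finset.mem_Ioc.2 ⟨hprime.pos, Nat.le_floor (mem_primesIcc.1 hp).2.2⟩,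
    hprime, (mem_primesIcc.1 hph).1⟩

theorem primes_counting_autocorrelation_positive_intervals_general
    (ha : ∀ᶠ i in l, 0 < a i) (hb : Tendsto b l atTop) (hc : 1 < c)
    (hab : ∀ᶠ i in l, c * a i ≤ b i) {f : ℝ → ℂ} (hf : HasCompactSupport f) :
    Tendsto (fun i ↦ autoCorr (PrimesR ∩ Icc (a i) (b i)) f) l (𝓝 (f 0)) := by
  have hcard := div_log_isBigO_card_primesIcc hb hc hab
  have hnonempty : ∀ᶠ i in l, (primesIcc (a i) (b i)).Nonempty := by
    filter_upwards [hcard.eq_zero_imp, hb.eventually_gt_atTop 1] with i hi hbi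
    refine Finset.card_ne_zero.1 fun hzero ↦ ?_
    exact (div_pos (one_pos.trans hbi) (Real.log_pos hbi)).ne' (hi (mod_cast hzero))
  have hlim := tendsto_autoCorr_of_card_filter_add_mem_isLittleO
    (S := fun i ↦ (primesIcc (a i) (b i)).map Nat.castEmbedding)
    (by simpa only [Finset.map_nonempty] using hnonempty)
    (fun h hh ↦ by
      simp only [card_filter_add_mem_map_castEmbedding, Finset.card_map]
      exact (card_filter_add_mem_primesIcc_isLittleO hb (Int.natAbs_ne_zero.2 hh)).trans_isBigO
        hcard) hf
  refine hlim.congr' ?_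
  filter_upwards [ha] with i hi
  rw [primesR_inter_Icc hi]

end Autocorrelation

theorem primes_counting_autocorrelation_positive_intervals
    (a b : ℕ → ℝ) (hpos : ∀ n, 0 < a n) (hab : ∀ n, a n < b n)
    (hw : Tendsto (fun n => b n - a n) atTop atTop)
    (hc : ∃ c : ℝ, 1 < c ∧ ∃ N : ℕ, ∀ n > N, c * a n ≤ b n) :
    ∀ f : ℝ → ℂ, Continuous f → HasCompactSupport f →
      Tendsto (fun n => autoCorr (PrimesR ∩ Set.Icc (a n) (b n)) f) atTop (nhds (f 0)) := by
  obtain ⟨c, hc, N, hN⟩ := hc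
  exact fun f _ hf ↦ primes_counting_autocorrelation_positive_intervals_general (.of_forall hpos)
    (tendsto_atTop_mono (fun n ↦ sub_le_self _ (hpos n).le) hw) hc
    ((eventually_gt_atTop N).mono hN) hf
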